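/- arXiv:2101.04415 — 3 statements merged into one kernel-verified Lean document; each statement's English description precedes it below -/
import Mathlib

section
/- Let Γ be a finite simplicial graph that is connected, irreducible (i.e., Γ is not a nontrivial join, equivalently, the opposite graph Γ° is connected), and has at least two vertices. Then Γ admits a good partition of its vertex set. -/
/-- A *good partition* of the vertex set of a simplicial graph `Γ` into three
nonempty parts `Lp ⊔ L ⊔ Lm`. -/
def GoodPartition {V : Type*} (Γ : SimpleGraph V) (Lp L Lm : Set V) : Prop :=
  Lp.Nonempty ∧ L.Nonempty ∧ Lm.Nonempty ∧
  Disjoint Lp L ∧ Disjoint Lp Lm ∧ Disjoint L Lm ∧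
  Lp ∪ L ∪ Lm = Set.univ ∧
  (∀ w ∈ Lp, ∀ v ∈ Lm, 2 ≤ Γ.dist w v) ∧
  (∀ w ∈ Lp, ¬ ∃ v ∈ L ∪ Lm, Γ.neighborSet v ⊆ Γ.neighborSet w ∪ Lp) ∧
  (∀ w ∈ Lm, ¬ ∃ v ∈ L ∪ Lp, Γ.neighborSet v ⊆ Γ.neighborSet w ∪ Lm) ∧
  (∀ w ∈ Lp, (Γ.induce ((L ∪ Lm) \ (Γ.neighborSet w ∪ {w}))).Connected) ∧
  (∀ w ∈ Lm, (Γ.induce ((L ∪ Lp) \ (Γ.neighborSet w ∪ {w}))).Connected)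

/-!
The sets `Λ⁺` and `Λ⁻` are sought as sets of common non-neighbours. Let `C` be a maximal connected
set having a common non-neighbour, and `Λ⁺` the set of its common non-neighbours. Each vertex of the
boundary of `C` is adjacent to every `w ∈ Λ⁺`, since otherwise it could be added to `C`. Hence `C`
is exactly what the star of `w` leaves of the complement of `Λ⁺`, which gives the connectivity
condition. If `C` has two vertices, every vertex outside `Λ⁺` has a neighbour in `C`; this neighbour
is neither in `Λ⁺` nor adjacent to `w`, which gives the condition on neighbour sets.

To obtain `Λ⁻`, irreducibility provides a boundary vertex `s` of `C` that is not adjacent to all of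
`C`. The set `Λ⁺ ∪ {s}` is a cone with apex `s`, so it is connected, and it has a common
non-neighbour in `C`. A maximal connected set `D ⊇ Λ⁺ ∪ {s}` of the same kind yields `Λ⁻`, and
`s` survives in `Λ`.
-/

section

variable {V : Type*} {Γ : SimpleGraph V} {A B C D T : Set V} {s v : V}

theorem exists_adj_of_mem_of_notMem (h : Γ.Preconnected) {x y : V} (hx : x ∈ A) (hy : y ∉ A) :
    ∃ a ∈ A, ∃ b ∉ A, Γ.Adj a b := by
  obtain ⟨p⟩ := h x y
  obtain ⟨d, -, hfst, hsnd⟩ := p.exists_boundary_dart A hx hy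
  exact ⟨d.fst, hfst, d.snd, hsnd, d.adj⟩

theorem connected_induce_insert_of_adj (hC : (Γ.induce C).Preconnected) {c : V} (hc : c ∈ C)
    (hsc : Γ.Adj s c) : (Γ.induce (insert s C)).Connected :=
  have hs : (Γ.induce {s}).Preconnected := .of_subsingleton
  SimpleGraph.connected_induce_union hs hC (Set.mem_singleton s) hc hsc

theorem connected_induce_insert_of_forall_adj (h : ∀ a ∈ A, Γ.Adj s a) :
    (Γ.induce (insert s A)).Connected := by
  rw [SimpleGraph.connected_iff_exists_forall_reachable]
  refine ⟨⟨s, Set.mem_insert s A⟩, ?_⟩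
  rintro ⟨v, rfl | hv⟩
  · exact .rfl
  · exact SimpleGraph.Adj.reachable (SimpleGraph.induce_adj.2 (h v hv))

/-- The far set of `C`: the vertices that neither lie in `C` nor have a neighbour in `C`, encoded as
the common neighbours of `C` in the opposite graph. Both outer parts of the good partition are of
this form. -/
def farSet (Γ : SimpleGraph V) (C : Set V) : Set V :=
  {u | ∀ c ∈ C, Γᶜ.Adj c u}

theorem farSet_anti (h : C ⊆ D) : farSet Γ D ⊆ farSet Γ C :=
  fun _ hu c hc => hu c (h hc)

theorem disjoint_farSet : Disjoint C (farSet Γ C) :=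
  Set.disjoint_left.2 fun c hc hc' => Γᶜ.irrefl (hc' c hc)

theorem exists_adj_of_notMem_of_notMem_farSet (hvC : v ∉ C) (hv : v ∉ farSet Γ C) :
    ∃ c ∈ C, Γ.Adj v c := by
  by_contra! hnadj
  exact hv fun c hc => ⟨ne_of_mem_of_not_mem hc hvC, fun hcv => hnadj c hc hcv.symm⟩

theorem mem_farSet_insert {u : V} :
    u ∈ farSet Γ (insert s C) ↔ Γᶜ.Adj s u ∧ u ∈ farSet Γ C :=
  Set.forall_mem_insert

/-- A set `A` of vertices that meets the requirements of a good partition on `Λ⁺` (or on `Λ⁻`)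
concerning neighbour sets and connectivity. These depend on `A` alone, since the other two parts
together form `Aᶜ`. -/
structure IsGoodSide (Γ : SimpleGraph V) (A : Set V) : Prop where
  nonempty : A.Nonempty
  not_neighborSet_subset : ∀ w ∈ A, ∀ v ∉ A, ¬ Γ.neighborSet v ⊆ Γ.neighborSet w ∪ A
  connected_induce : ∀ w ∈ A, (Γ.induce (Aᶜ \ (Γ.neighborSet w ∪ {w}))).Connected

theorem goodPartition_of_isGoodSide (hΓ : Γ.Preconnected) (hA : IsGoodSide Γ A)
    (hB : IsGoodSide Γ B) (hAB : B ⊆ farSet Γ A) (hne : (A ∪ B)ᶜ.Nonempty) :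
    GoodPartition Γ A (A ∪ B)ᶜ B := by
  have hdisj : Disjoint A B := disjoint_farSet.mono_right hAB
  have hA_compl : (A ∪ B)ᶜ ∪ B = Aᶜ := by
    rw [Set.compl_union, ← Set.sdiff_eq, Set.sdiff_union_of_subset hdisj.subset_compl_left]
  have hB_compl : (A ∪ B)ᶜ ∪ A = Bᶜ := by
    rw [Set.union_comm A B, Set.compl_union, ← Set.sdiff_eq,
      Set.sdiff_union_of_subset hdisj.subset_compl_right]
  have hdist : ∀ w ∈ A, ∀ v ∈ B, 2 ≤ Γ.dist w v := fun w hw v hv =>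
    have hwv := hAB hv w hw
    (hΓ w v).one_lt_dist_of_ne_of_not_adj hwv.1 hwv.2
  refine ⟨hA.nonempty, hne, hB.nonempty, ?_, hdisj, ?_, ?_, hdist, ?_, ?_, ?_, ?_⟩
  · exact disjoint_compl_right.mono_left Set.subset_union_left
  · exact disjoint_compl_left.mono_right Set.subset_union_right
  · rw [Set.union_assoc, hA_compl, Set.union_compl_self]
  · rw [hA_compl]
    exact fun w hw ⟨v, hv, hsub⟩ => hA.not_neighborSet_subset w hw v hv hsub
  · rw [hB_compl]
    exact fun w hw ⟨v, hv, hsub⟩ => hB.not_neighborSet_subset w hw v hv hsub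
  · rw [hA_compl]
    exact hA.connected_induce
  · rw [hB_compl]
    exact hB.connected_induce

/-- A connected set `C` with at least two vertices and a nonempty far set, such that every vertex
outside `C` and its far set is adjacent to the whole far set. The far set of a core is a good
side. -/
structure IsCore (Γ : SimpleGraph V) (C : Set V) : Prop where
  connected : (Γ.induce C).Connected
  nontrivial : C.Nontrivial
  farSet_nonempty : (farSet Γ C).Nonempty
  adj_of_mem_farSet : ∀ u ∈ farSet Γ C, ∀ s ∉ C, s ∉ farSet Γ C → Γ.Adj s u

theorem isCore_of_maximal
    (hC : Maximal (fun C => (Γ.induce C).Connected ∧ (farSet Γ C).Nonempty) C)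
    (hnt : C.Nontrivial) : IsCore Γ C where
  connected := hC.prop.1
  nontrivial := hnt
  farSet_nonempty := hC.prop.2
  adj_of_mem_farSet u hu s hsC hs := by
    by_contra hsu
    obtain ⟨c, hc, hsc⟩ := exists_adj_of_notMem_of_notMem_farSet hsC hs
    have hconn : (Γ.induce (insert s C)).Connected :=
      connected_induce_insert_of_adj hC.prop.1.preconnected hc hsc
    have hfar : u ∈ farSet Γ (insert s C) :=
      mem_farSet_insert.2 ⟨⟨(ne_of_mem_of_not_mem hu hs).symm, hsu⟩, hu⟩
    exact hsC (hC.le_of_ge ⟨hconn, u, hfar⟩ (Set.subset_insert s C) (Set.mem_insert s C))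

theorem exists_isCore_superset [Finite V] (hconn : (Γ.induce T).Connected) (hnt : T.Nontrivial)
    (hfar : (farSet Γ T).Nonempty) : ∃ C, T ⊆ C ∧ IsCore Γ C := by
  obtain ⟨C, hTC, hC⟩ := Set.Finite.exists_le_maximal
    (Set.toFinite {C | (Γ.induce C).Connected ∧ (farSet Γ C).Nonempty}) ⟨hconn, hfar⟩
  exact ⟨C, hTC, isCore_of_maximal hC (hnt.mono hTC)⟩

namespace IsCore

theorem exists_adj_of_notMem_farSet (hC : IsCore Γ C) (hv : v ∉ farSet Γ C) :
    ∃ c ∈ C, Γ.Adj v c := by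
  by_cases hvC : v ∈ C
  · have : Nontrivial C := Set.nontrivial_coe_sort.2 hC.nontrivial
    obtain ⟨c, hvc⟩ := hC.connected.preconnected.exists_adj_of_nontrivial ⟨v, hvC⟩
    exact ⟨c, c.2, SimpleGraph.induce_adj.1 hvc⟩
  · exact exists_adj_of_notMem_of_notMem_farSet hvC hv

theorem compl_farSet_sdiff_star (hC : IsCore Γ C) {w : V} (hw : w ∈ farSet Γ C) :
    (farSet Γ C)ᶜ \ (Γ.neighborSet w ∪ {w}) = C := by
  ext v
  constructor
  · rintro ⟨hv, hvw⟩
    by_contra hvC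
    exact hvw (Or.inl (hC.adj_of_mem_farSet w hw v hvC hv).symm)
  · refine fun hv => ⟨Set.disjoint_left.1 disjoint_farSet hv, ?_⟩
    rintro (hwv | hvw)
    · exact (hw v hv).2 hwv.symm
    · exact (hw v hv).1 hvw

theorem isGoodSide_farSet (hC : IsCore Γ C) : IsGoodSide Γ (farSet Γ C) where
  nonempty := hC.farSet_nonempty
  not_neighborSet_subset w hw v hv hsub := by
    obtain ⟨c, hc, hvc⟩ := hC.exists_adj_of_notMem_farSet hv
    rcases hsub hvc with hwc | hcfar
    · exact (hw c hc).2 hwc.symm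
    · exact Set.disjoint_left.1 disjoint_farSet hc hcfar
  connected_induce w hw := by
    rw [hC.compl_farSet_sdiff_star hw]
    exact hC.connected

theorem exists_notMem_union_farSet (hC : IsCore Γ C) (hΓ : Γ.Preconnected) :
    ∃ s, s ∉ C ∪ farSet Γ C := by
  obtain ⟨c, hc⟩ := hC.nontrivial.nonempty
  obtain ⟨u, hu⟩ := hC.farSet_nonempty
  obtain ⟨c, hc, s, hs, hcs⟩ :=
    exists_adj_of_mem_of_notMem hΓ hc (Set.disjoint_right.1 disjoint_farSet hu)
  exact ⟨s, not_or.2 ⟨hs, fun hsfar => (hsfar c hc).2 hcs⟩⟩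

theorem exists_compl_adj_notMem_union_farSet (hC : IsCore Γ C) (hΓ : Γ.Preconnected)
    (hΓc : Γᶜ.Preconnected) : ∃ w ∈ C, ∃ s ∉ C ∪ farSet Γ C, Γᶜ.Adj w s := by
  obtain ⟨c, hc⟩ := hC.nontrivial.nonempty
  obtain ⟨y, hy⟩ := hC.exists_notMem_union_farSet hΓ
  obtain ⟨w, hw, s, hs, hws⟩ := exists_adj_of_mem_of_notMem hΓc (Or.inl hc) hy
  rcases hw with hw | hw
  · exact ⟨w, hw, s, hs, hws⟩
  · obtain ⟨hsC, hsfar⟩ := not_or.1 hs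
    exact absurd (hC.adj_of_mem_farSet w hw s hsC hsfar).symm hws.2

theorem exists_isCore_ssuperset_farSet [Finite V] (hC : IsCore Γ C) (hΓ : Γ.Preconnected)
    (hΓc : Γᶜ.Preconnected) : ∃ D, farSet Γ C ⊂ D ∧ IsCore Γ D := by
  obtain ⟨w, hw, s, hs, hws⟩ := hC.exists_compl_adj_notMem_union_farSet hΓ hΓc
  obtain ⟨hsC, hsfar⟩ := not_or.1 hs
  have hconn : (Γ.induce (insert s (farSet Γ C))).Connected :=
    connected_induce_insert_of_forall_adj fun u hu => hC.adj_of_mem_farSet u hu s hsC hsfar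
  obtain ⟨u, hu⟩ := hC.farSet_nonempty
  have hnt : (insert s (farSet Γ C)).Nontrivial :=
    ⟨s, Set.mem_insert s _, u, Set.mem_insert_of_mem s hu, (ne_of_mem_of_not_mem hu hsfar).symm⟩
  have hfar : w ∈ farSet Γ (insert s (farSet Γ C)) :=
    mem_farSet_insert.2 ⟨hws.symm, fun u hu => (hu w hw).symm⟩
  obtain ⟨D, hD, hDcore⟩ := exists_isCore_superset hconn hnt ⟨w, hfar⟩
  exact ⟨D, (Set.ssubset_insert hsfar).trans_subset hD, hDcore⟩

end IsCore

theorem exists_adj_farSet_pair_nonempty {x y : V} (hxy : Γ.Adj x y) (h : Γᶜ.Reachable x y) :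
    ∃ a b, Γ.Adj a b ∧ (farSet Γ {a, b}).Nonempty := by
  obtain ⟨p, hp⟩ := h.exists_walk_length_eq_dist
  have hdist : 1 < Γᶜ.dist x y :=
    h.one_lt_dist_of_ne_of_not_adj hxy.ne fun hxy' => hxy'.2 hxy
  obtain ⟨a, u, b, hau, hub, hab, hne⟩ := p.exists_adj_adj_not_adj_ne hp hdist
  have hadj : Γ.Adj a b := not_not.1 fun hnadj => hab ⟨hne, hnadj⟩
  refine ⟨a, b, hadj, u, ?_⟩
  rintro c (rfl | rfl)
  · exact hau
  · exact hub.symm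

theorem exists_isCore [Finite V] [Nontrivial V] (hΓ : Γ.Preconnected) (hΓc : Γᶜ.Preconnected) :
    ∃ C, IsCore Γ C := by
  obtain ⟨x, -⟩ := exists_pair_ne V
  obtain ⟨y, hxy⟩ := hΓ.exists_adj_of_nontrivial x
  obtain ⟨a, b, hab, hfar⟩ := exists_adj_farSet_pair_nonempty hxy (hΓc x y)
  obtain ⟨C, -, hC⟩ := exists_isCore_superset
    (SimpleGraph.induce_pair_connected_of_adj hab) (Set.nontrivial_pair hab.ne) hfar
  exact ⟨C, hC⟩

end

/-- a finite connected irreducible simplicial graph (i.e. whose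
opposite graph `Γᶜ` is connected) with at least two vertices admits a good
partition of its vertex set. -/
theorem stmt2 {V : Type*} [Fintype V] (Γ : SimpleGraph V) (hconn : Γ.Connected)
    (hirr : Γᶜ.Connected) (hcard : 2 ≤ Fintype.card V) :
    ∃ Lp L Lm : Set V, GoodPartition Γ Lp L Lm := by
  have : Nontrivial V := Fintype.one_lt_card_iff_nontrivial.1 hcard
  obtain ⟨C, hC⟩ := exists_isCore hconn.preconnected hirr.preconnected
  obtain ⟨D, hCD, hD⟩ :=
    hC.exists_isCore_ssuperset_farSet hconn.preconnected hirr.preconnected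
  obtain ⟨s, hsD, hsC⟩ := Set.exists_of_ssubset hCD
  have hs : s ∈ (farSet Γ C ∪ farSet Γ D)ᶜ :=
    not_or.2 ⟨hsC, Set.disjoint_left.1 disjoint_farSet hsD⟩
  exact ⟨_, _, _, goodPartition_of_isGoodSide hconn.preconnected hC.isGoodSide_farSet
    hD.isGoodSide_farSet (farSet_anti hCD.subset) ⟨s, hs⟩⟩
end

section
/- Let M be a median algebra admitting an injective median morphism into a product of d rank-1 median algebras. Then for every subset A ⊆ M one has ⟨A⟩ = ℳ^{g(d)}(A), where g(d) = 1 + 2^{2^{d(d−1)/2}}. -/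
/-- A median algebra: a set with a ternary median operation satisfying the
standard axioms. -/
structure MedianAlgebra (X : Type*) where
  med : X → X → X → X
  absorb : ∀ a b, med a a b = a
  rot : ∀ a b c, med a b c = med b c a
  swap : ∀ a b c, med a b c = med b a c
  assoc : ∀ a x b c, med (med a x b) x c = med a x (med b x c)

/-- A subset `C` is convex for the median operation `med` if
`med(C × C × X) ⊆ C`. -/
def IsConvexSet {X : Type*} (med : X → X → X → X) (C : Set X) : Prop :=
  ∀ a ∈ C, ∀ b ∈ C, ∀ x : X, med a b x ∈ C

/-- A halfspace: a subset such that both it and its complement are nonempty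
and convex. -/
def IsHalfspace {X : Type*} (med : X → X → X → X) (h : Set X) : Prop :=
  h.Nonempty ∧ hᶜ.Nonempty ∧ IsConvexSet med h ∧ IsConvexSet med hᶜ

/-- Two halfspaces (equivalently, the walls they bound) are transverse if all
four pairwise intersections of associated halfspaces are nonempty. -/
def Transverse {X : Type*} (h k : Set X) : Prop :=
  (h ∩ k).Nonempty ∧ (h ∩ kᶜ).Nonempty ∧ (hᶜ ∩ k).Nonempty ∧ (hᶜ ∩ kᶜ).Nonempty

/-- The median algebra has rank at most `r`: any collection of pairwise
transverse (distinct) halfspaces has cardinality at most `r`. -/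
def RankLE {X : Type*} (med : X → X → X → X) (r : ℕ) : Prop :=
  ∀ H : Finset (Set X), (∀ h ∈ H, IsHalfspace med h) →
    (∀ h ∈ H, ∀ k ∈ H, h ≠ k → Transverse h k) → H.card ≤ r

/-- Rank 1: no two halfspaces are transverse. -/
def Rank1 {X : Type*} (M : MedianAlgebra X) : Prop :=
  ∀ h k : Set X, IsHalfspace M.med h → IsHalfspace M.med k → ¬ Transverse h k

/-- The operator `ℳ(A) = med(A × A × A)`. -/
def MSet {X : Type*} (med : X → X → X → X) (A : Set X) : Set X :=
  {p | ∃ a ∈ A, ∃ b ∈ A, ∃ c ∈ A, med a b c = p}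

/-- The median subalgebra generated by `A`: the smallest subset containing `A`
and closed under the median operation. -/
def medSpan {X : Type*} (med : X → X → X → X) (A : Set X) : Set X :=
  ⋂₀ {S : Set X | A ⊆ S ∧ ∀ a ∈ S, ∀ b ∈ S, ∀ c ∈ S, med a b c ∈ S}

/-- The coordinatewise median operation on a product. -/
def prodMed {X Y : Type*} (m₁ : X → X → X → X) (m₂ : Y → Y → Y → Y) :
    X × Y → X × Y → X × Y → X × Y :=
  fun p q r => (m₁ p.1 q.1 r.1, m₂ p.2 q.2 r.2)

/-!
For a point `x` of a rank-1 median algebra, the relation `x ∉ [a, b]` between `a` and `b` is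
symmetric and transitive, and its classes, the branches at `x`, are convex; this uses
that points are separated by halfspaces. A median `m(a, b, c)` equals `x` exactly when `a, b, c`
lie in pairwise different branches. A union of two convex sets is a subalgebra, so if `x ∈ ⟨A⟩`
and two rank-1 coordinates are given, no two branches at the images of `x` cover `A`. König's
theorem (a bipartite graph without a vertex cover of size two has a matching of size three) then
yields three points of `A` whose median agrees with `x` in both coordinates. Finally, three
points that agree with `x` away from one coordinate each, for three different coordinates, have
a median that agrees with `x` everywhere, so every further application of `ℳ` gains one
coordinate. A linear number of iterations thus suffices, without any appeal to free median
algebras.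
-/

theorem exists_sup_eq_top_of_isMaximal {α : Type*} [SemilatticeSup α] [OrderTop α]
    {I : Order.Ideal α} (hI : I.IsMaximal) {p : α} (hp : p ∉ I) : ∃ c ∈ I, c ⊔ p = ⊤ := by
  obtain ⟨e, he⟩ := I.nonempty
  let J : Order.Ideal α :=
    { carrier := {z | ∃ c ∈ I, z ≤ c ⊔ p}
      lower' := fun _ _ hzw ⟨c, hc, hw⟩ => ⟨c, hc, hzw.trans hw⟩
      nonempty' := ⟨p, e, he, le_sup_right⟩
      directed' := fun z ⟨c, hc, hz⟩ w ⟨c', hc', hw⟩ =>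
        ⟨z ⊔ w, ⟨c ⊔ c', Order.Ideal.sup_mem hc hc',
          (sup_le_sup hz hw).trans_eq (sup_sup_distrib_right c c' p).symm⟩,
          le_sup_left, le_sup_right⟩ }
  have hIJ : I < J := SetLike.lt_iff_le_and_exists.2
    ⟨fun c hc => show c ∈ J from ⟨c, hc, le_sup_left⟩,
      p, show p ∈ J from ⟨e, he, le_sup_right⟩, hp⟩
  obtain ⟨c, hc, htop⟩ : ⊤ ∈ J := Order.Ideal.top_mem_iff_eq_top.2 (hI.isCoatom.2 J hIJ)
  exact ⟨c, hc, top_le_iff.1 htop⟩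

section PartialEquivalence

variable {α : Type*} {A : Set α} {R S : α → α → Prop}

-- View a point as an edge joining its `R`-class to its `S`-class. Then `e, e₁, g, e₂, e'` contain
-- an augmenting path for the matching `{e₁, e₂}`, as in the proof of König's theorem.
theorem exists_three_unrelated_of_augmenting (hR : ∀ a b, R a b → R b a)
    (hS : ∀ a b, S a b → S b a) (hR' : ∀ a b c, R a b → R b c → R a c)
    (hS' : ∀ a b c, S a b → S b c → S a c) {e e₁ e₂ e' g : α}
    (he : e ∈ A) (he₁ : e₁ ∈ A) (he₂ : e₂ ∈ A) (he' : e' ∈ A) (hg : g ∈ A)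
    (R₁₂ : ¬ R e₁ e₂) (S₁₂ : ¬ S e₁ e₂) (R₁ : ¬ R e₁ e) (R₂ : ¬ R e₂ e) (hSe : S e₁ e)
    (S₁ : ¬ S e₁ e') (S₂ : ¬ S e₂ e') (hRe : R e₂ e') (Rg : ¬ R e₂ g) (Sg : ¬ S e₁ g) :
    ∃ a ∈ A, ∃ b ∈ A, ∃ c ∈ A,
      (¬ R a b ∧ ¬ R b c ∧ ¬ R a c) ∧ ¬ S a b ∧ ¬ S b c ∧ ¬ S a c := by
  obtain ⟨f, hf, Rfg, hfR, hfS⟩ : ∃ f ∈ A, ¬ R f g ∧ ¬ R e₂ f ∧ (f = e₁ ∨ S e₁ f) := by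
    by_cases Rg₁ : R e₁ g
    · exact ⟨e, he, fun h => R₁ (hR' _ _ _ Rg₁ (hR _ _ h)), R₂, .inr hSe⟩
    · exact ⟨e₁, he₁, Rg₁, fun h => R₁₂ (hR _ _ h), .inl rfl⟩
  by_cases hSg : S e' g
  · exact ⟨f, hf, e₂, he₂, g, hg, by grind, by grind⟩
  · exact ⟨f, hf, e', he', g, hg, by grind, by grind⟩

theorem exists_three_unrelated (hR : ∀ a b, R a b → R b a)
    (hS : ∀ a b, S a b → S b a) (hR' : ∀ a b c, R a b → R b c → R a c)
    (hS' : ∀ a b c, S a b → S b c → S a c)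
    (hRR : ∀ p q, ∃ b ∈ A, ¬ R p b ∧ ¬ R q b) (hSS : ∀ p q, ∃ b ∈ A, ¬ S p b ∧ ¬ S q b)
    (hRS : ∀ p q, ∃ b ∈ A, ¬ R p b ∧ ¬ S q b) (hA : A.Nonempty) :
    ∃ a ∈ A, ∃ b ∈ A, ∃ c ∈ A,
      (¬ R a b ∧ ¬ R b c ∧ ¬ R a c) ∧ ¬ S a b ∧ ¬ S b c ∧ ¬ S a c := by
  obtain ⟨e₁, he₁⟩ := hA
  obtain ⟨e₂, he₂, R₁₂, S₁₂⟩ := hRS e₁ e₁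
  obtain ⟨e, he, R₁, R₂⟩ := hRR e₁ e₂
  obtain ⟨e', he', S₁, S₂⟩ := hSS e₁ e₂
  by_cases hS_off : ¬ S e₁ e ∧ ¬ S e₂ e
  · exact ⟨e₁, he₁, e₂, he₂, e, he, ⟨R₁₂, R₂, R₁⟩, S₁₂, hS_off.2, hS_off.1⟩
  by_cases hR_off : ¬ R e₁ e' ∧ ¬ R e₂ e'
  · exact ⟨e₁, he₁, e₂, he₂, e', he', ⟨R₁₂, hR_off.2, hR_off.1⟩, S₁₂, S₂, S₁⟩
  wlog hSe : S e₁ e generalizing e₁ e₂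
  · exact this e₂ he₂ e₁ he₁ (by grind) (by grind) R₂ R₁ S₂ S₁ (by grind) (by grind) (by grind)
  by_cases hRe : R e₂ e'
  · obtain ⟨g, hg, Rg, Sg⟩ := hRS e₂ e₁
    exact exists_three_unrelated_of_augmenting hR hS hR' hS' he he₁ he₂ he' hg
      R₁₂ S₁₂ R₁ R₂ hSe S₁ S₂ hRe Rg Sg
  · exact ⟨e, he, e₂, he₂, e', he', by grind, by grind⟩

end PartialEquivalence

section Subalgebra

variable {X : Type*} {med : X → X → X → X} {A B : Set X}

theorem iterate_MSet_subset_medSpan (k : ℕ) : (MSet med)^[k] A ⊆ medSpan med A := by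
  induction k with
  | zero => exact fun a ha S hS => hS.1 ha
  | succ k ih =>
    rw [Function.iterate_succ_apply']
    rintro _ ⟨a, ha, b, hb, c, hc, rfl⟩ S hS
    exact hS.2 a (ih ha S hS) b (ih hb S hS) c (ih hc S hS)

theorem medSpan_subset (hAB : A ⊆ B) (hB : ∀ a ∈ B, ∀ b ∈ B, ∀ c ∈ B, med a b c ∈ B) :
    medSpan med A ⊆ B :=
  Set.sInter_subset_of_mem ⟨hAB, hB⟩

theorem nonempty_of_mem_medSpan {x : X} (hx : x ∈ medSpan med A) : A.Nonempty := by
  by_contra hA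
  exact medSpan_subset (Set.not_nonempty_iff_eq_empty.1 hA).subset (by simp) hx

end Subalgebra

theorem IsConvexSet.preimage {X Y : Type*} {m : X → X → X → X} {n : Y → Y → Y → Y} {C : Set Y}
    (hC : IsConvexSet n C) {f : X → Y} (hf : ∀ a b c, f (m a b c) = n (f a) (f b) (f c)) :
    IsConvexSet m (f ⁻¹' C) := fun a ha b hb t => by
  rw [Set.mem_preimage, hf]
  exact hC _ ha _ hb _

namespace MedianAlgebra

variable {X : Type*} (M : MedianAlgebra X)

theorem swap_right (a b c : X) : M.med a b c = M.med a c b := by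
  rw [M.rot, M.swap, M.rot, M.rot]

theorem med_self_right (a b : X) : M.med a b b = b := by
  rw [M.rot, M.absorb]

theorem med_self_outer (a b : X) : M.med a b a = a := by
  rw [M.swap_right, M.absorb]

theorem med_med_left (x a b c : X) : M.med x (M.med x a b) c = M.med x a (M.med x b c) := by
  rw [M.swap x (M.med x a b), M.swap x a b, M.assoc, M.swap a x, M.swap b x]

theorem subset_MSet (A : Set X) : A ⊆ MSet M.med A :=
  fun a ha => ⟨a, ha, a, ha, a, ha, M.absorb a a⟩

variable {M} in
theorem med_mem_of_two_mem {C : Set X} (hC : IsConvexSet M.med C) {a b c : X}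
    (h : a ∈ C ∧ b ∈ C ∨ b ∈ C ∧ c ∈ C ∨ a ∈ C ∧ c ∈ C) : M.med a b c ∈ C := by
  rcases h with ⟨ha, hb⟩ | ⟨hb, hc⟩ | ⟨ha, hc⟩
  · exact hC a ha b hb c
  · exact M.rot a b c ▸ hC b hb c hc a
  · exact M.swap_right a b c ▸ hC a ha c hc b

variable {M} in
theorem medSpan_subset_union {A C D : Set X} (hC : IsConvexSet M.med C)
    (hD : IsConvexSet M.med D) (hA : A ⊆ C ∪ D) : medSpan M.med A ⊆ C ∪ D := by
  refine medSpan_subset hA fun a ha b hb c hc => ?_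
  have pigeonhole : (a ∈ C ∧ b ∈ C ∨ b ∈ C ∧ c ∈ C ∨ a ∈ C ∧ c ∈ C) ∨
      (a ∈ D ∧ b ∈ D ∨ b ∈ D ∧ c ∈ D ∨ a ∈ D ∧ c ∈ D) := by
    simp only [Set.mem_union] at ha hb hc
    tauto
  exact pigeonhole.imp (med_mem_of_two_mem hC) (med_mem_of_two_mem hD)

/-- The interval between `a` and `b`, that is, the set of all medians `M.med a b t`. -/
def interval (a b : X) : Set X := {z | M.med a b z = z}

variable {M} in
theorem mem_interval {a b z : X} : z ∈ M.interval a b ↔ M.med a b z = z :=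
  Iff.rfl

theorem med_mem_interval (a b t : X) : M.med a b t ∈ M.interval a b := by
  rw [mem_interval, ← M.med_med_left, M.med_self_right]

theorem med_mem_interval_right (a b t : X) : M.med a b t ∈ M.interval b t :=
  M.rot a b t ▸ M.med_mem_interval b t a

theorem med_mem_interval_outer (a b t : X) : M.med a b t ∈ M.interval a t :=
  M.swap_right a b t ▸ M.med_mem_interval a t b

theorem right_mem_interval (a b : X) : b ∈ M.interval a b :=
  M.med_self_right a b

theorem interval_comm (a b : X) : M.interval a b = M.interval b a := by
  ext z
  rw [mem_interval, mem_interval, M.swap]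

variable {M} {a b c u v w x y z : X}

theorem interval_subset_interval (hz : z ∈ M.interval a b) :
    M.interval a z ⊆ M.interval a b := by
  intro w hw
  rw [mem_interval, ← mem_interval.1 hw, ← M.med_med_left, mem_interval.1 hz]

theorem mem_interval_of_mem_interval (hz : z ∈ M.interval a b) (hw : w ∈ M.interval a z) :
    z ∈ M.interval w b := by
  calc M.med w b z
      = M.med z w b := (M.rot z w b).symm
    _ = M.med z (M.med z w a) b := by rw [← M.rot a z w, mem_interval.1 hw]
    _ = M.med z w (M.med a b z) := by rw [M.med_med_left, M.rot z a b]
    _ = z := by rw [mem_interval.1 hz, M.med_self_outer]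

theorem eq_of_mem_interval (hb : b ∈ M.interval c a) (ha : a ∈ M.interval c b) : a = b :=
  (mem_interval.1 ha).symm.trans ((M.swap_right c b a).trans hb)

-- Write `⊔` for `M.med x`, the join in the order with greatest element `x`. The point
-- `h = u ⊔ v ⊔ w` lies in `[u, v]` as `v ⊔ w` does, and `u ⊔ v ≤ h`, which forces `h = u ⊔ v`.
theorem med_mem_interval_of_mem_interval (hw : w ∈ M.interval u v) (x : X) :
    M.med u v x ∈ M.interval x w := by
  rw [← M.rot x u v]
  set e := M.med x u v
  set q := M.med x v w
  have hq : q ∈ M.interval u v := by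
    rw [M.interval_comm u v] at hw ⊢
    exact interval_subset_interval hw (M.med_mem_interval_right x v w)
  have hh : M.med x e w = M.med x u q := M.med_med_left x u v w
  set h := M.med x e w
  have h_uv : h ∈ M.interval u v :=
    interval_subset_interval hq (hh ▸ M.med_mem_interval_right x u q)
  have h_xe : h ∈ M.interval x e := M.med_mem_interval x e w
  have e_hu : e ∈ M.interval h u := mem_interval_of_mem_interval (M.med_mem_interval x u v) h_xe
  have e_hv : e ∈ M.interval h v :=
    mem_interval_of_mem_interval (M.med_mem_interval_outer x u v) h_xe
  have h_ev : h ∈ M.interval e v :=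
    mem_interval_of_mem_interval h_uv (M.interval_comm h u ▸ e_hu)
  have heq : e = h :=
    eq_of_mem_interval (M.interval_comm e v ▸ h_ev) (M.interval_comm h v ▸ e_hv)
  exact heq ▸ M.med_mem_interval_outer x e w

theorem med_eq_of_mem_interval (hab : x ∈ M.interval a b) (hbc : x ∈ M.interval b c)
    (hac : x ∈ M.interval a c) : M.med a b c = x := by
  have hc : M.med a b c ∈ M.interval c x := med_mem_interval_of_mem_interval hab c
  have ha : M.med a b c ∈ M.interval a x :=
    M.rot a b c ▸ med_mem_interval_of_mem_interval hbc a
  have hx : x ∈ M.interval (M.med a b c) c := mem_interval_of_mem_interval hac ha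
  exact eq_of_mem_interval (M.interval_comm _ c ▸ hx) hc

variable (M) in
theorem isConvexSet_setOf_mem_interval (a x : X) :
    IsConvexSet M.med {b | x ∈ M.interval a b} := by
  intro p hp q hq t
  have hx : x ∈ M.interval a (M.med p q a) := by
    rw [mem_interval, ← M.rot a p q, M.med_med_left, mem_interval.1 hq, mem_interval.1 hp]
  exact interval_subset_interval
    (med_mem_interval_of_mem_interval (M.med_mem_interval p q t) a) hx

variable (M) in
/-- The join semilattice on `M` with join `M.med x`, in which `a ≤ b` means that `b` lies between
`x` and `a`, so that `x` is the greatest element. -/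
abbrev semilatticeSup (x : X) : SemilatticeSup X :=
  letI : Max X := ⟨M.med x⟩
  SemilatticeSup.mk' (M.swap_right x) (M.med_med_left x) (M.med_self_right x)

variable (M) in
/-- The base point `x` is the greatest element of `M.semilatticeSup x`. -/
abbrev orderTop (x : X) : letI := M.semilatticeSup x; OrderTop X :=
  letI := M.semilatticeSup x
  { top := x, le_top := M.med_self_outer x }

-- A maximal ideal of the semilattice with top `x` is a halfspace.
theorem exists_isHalfspace_of_ne (hxy : x ≠ y) :
    ∃ h, IsHalfspace M.med h ∧ y ∈ h ∧ x ∉ h := by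
  let := M.semilatticeSup x
  let := M.orderTop x
  obtain ⟨I, hyI, hI⟩ :=
    (Order.Ideal.isProper_principal_iff.2 (show y ≠ ⊤ from hxy.symm)).exists_le_maximal
  have hy : y ∈ I := Order.Ideal.principal_le_iff.1 hyI
  have hx : x ∉ I := hI.toIsProper.top_notMem
  have hconvex : IsConvexSet M.med (I : Set X) := fun p hp q hq t => by
    have hle : M.med p q t ≤ p ⊔ q := by
      change M.med x p q ∈ M.interval x (M.med p q t)
      rw [M.rot x p q]
      exact med_mem_interval_of_mem_interval (M.med_mem_interval p q t) x
    exact I.lower hle (Order.Ideal.sup_mem hp hq)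
  have hconvex_compl : IsConvexSet M.med (I : Set X)ᶜ := fun p hp q hq t hw => by
    obtain ⟨c, hc, hcp⟩ := exists_sup_eq_top_of_isMaximal hI hp
    obtain ⟨c', hc', hcq⟩ := exists_sup_eq_top_of_isMaximal hI hq
    have mem_interval_iff_sup (a b : X) : x ∈ M.interval a b ↔ a ⊔ b = ⊤ :=
      Eq.congr_left (M.rot x a b).symm
    have hp' : x ∈ M.interval (c ⊔ c') p := by
      rw [mem_interval_iff_sup, sup_right_comm, hcp, top_sup_eq]
    have hq' : x ∈ M.interval (c ⊔ c') q := by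
      rw [mem_interval_iff_sup, sup_assoc, hcq, sup_top_eq]
    have htop : c ⊔ c' ⊔ M.med p q t = ⊤ :=
      (mem_interval_iff_sup _ _).1 (M.isConvexSet_setOf_mem_interval _ x p hp' q hq' t)
    exact hx (htop ▸ Order.Ideal.sup_mem (Order.Ideal.sup_mem hc hc') hw : ⊤ ∈ I)
  exact ⟨I, ⟨⟨y, hy⟩, ⟨x, hx⟩, hconvex, hconvex_compl⟩, hy, hx⟩

theorem exists_isHalfspace_of_notMem_interval (hx : x ∉ M.interval a b) :
    ∃ h, IsHalfspace M.med h ∧ a ∈ h ∧ b ∈ h ∧ x ∉ h := by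
  obtain ⟨h, hh, hm, hxh⟩ := exists_isHalfspace_of_ne (M := M) (Ne.symm hx)
  refine ⟨h, hh, ?_, ?_, hxh⟩ <;> by_contra hn
  · exact hh.2.2.2 a hn x hxh b (M.swap_right a b x ▸ hm)
  · exact hh.2.2.2 b hn x hxh a (M.rot a b x ▸ hm)

theorem interval_subset_union_of_rank1 (hM : Rank1 M) (a b c : X) :
    M.interval a c ⊆ M.interval a b ∪ M.interval b c := by
  intro x hx
  by_contra! hn
  obtain ⟨hab, hbc⟩ := not_or.1 hn
  obtain ⟨h, hh, ah, bh, xh⟩ := exists_isHalfspace_of_notMem_interval hab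
  obtain ⟨k, hk, bk, ck, xk⟩ := exists_isHalfspace_of_notMem_interval hbc
  have ch : c ∉ h := fun ch => xh (hx ▸ hh.2.2.1 a ah c ch x)
  have ak : a ∉ k := fun ak => xk (hx ▸ hk.2.2.1 a ak c ck x)
  exact hM h k hh hk ⟨⟨b, bh, bk⟩, ⟨a, ah, ak⟩, ⟨c, ch, ck⟩, ⟨x, xh, xk⟩⟩

variable (M) in
/-- The branch at `x` containing `a`: the points that `x` does not separate from `a`. In rank 1 the
branches at `x` partition the complement of `x`; the branch at `x` of `x` itself is empty. -/
def branch (x a : X) : Set X := {b | x ∉ M.interval a b}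

theorem mem_branch_symm (h : b ∈ M.branch x a) : a ∈ M.branch x b :=
  fun hx => h (M.interval_comm b a ▸ hx)

theorem mem_branch_trans (hM : Rank1 M) (hab : b ∈ M.branch x a) (hbc : c ∈ M.branch x b) :
    c ∈ M.branch x a := fun hac =>
  (interval_subset_union_of_rank1 hM a b c hac).elim hab hbc

theorem self_notMem_branch (x a : X) : x ∉ M.branch x a :=
  not_not.2 (M.right_mem_interval a x)

theorem isConvexSet_branch (hM : Rank1 M) (x a : X) : IsConvexSet M.med (M.branch x a) := by
  intro b hb c hc t
  have hbc : c ∈ M.branch x b := mem_branch_trans hM (mem_branch_symm hb) hc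
  have hbm : M.med b c t ∈ M.branch x b := fun hx =>
    hbc (interval_subset_interval (M.med_mem_interval b c t) hx)
  exact mem_branch_trans hM hb hbm

section Hom

variable {Y Z : Type*} {N : MedianAlgebra Y} {P : MedianAlgebra Z} {f : X → Y} {g : X → Z}
  {A : Set X}

theorem exists_notMem_branch_of_mem_medSpan (hN : Rank1 N) (hP : Rank1 P)
    (hf : ∀ a b c, f (M.med a b c) = N.med (f a) (f b) (f c))
    (hg : ∀ a b c, g (M.med a b c) = P.med (g a) (g b) (g c))
    (hx : x ∈ medSpan M.med A) (y : Y) (z : Z) :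
    ∃ a ∈ A, f a ∉ N.branch (f x) y ∧ g a ∉ P.branch (g x) z := by
  by_contra! hcover
  have hA : A ⊆ f ⁻¹' N.branch (f x) y ∪ g ⁻¹' P.branch (g x) z :=
    fun a ha => or_iff_not_imp_left.2 (hcover a ha)
  exact (medSpan_subset_union ((isConvexSet_branch hN _ _).preimage hf)
    ((isConvexSet_branch hP _ _).preimage hg) hA hx).elim
    (self_notMem_branch _ _) (self_notMem_branch _ _)

theorem exists_mem_MSet_of_mem_medSpan (hN : Rank1 N) (hP : Rank1 P)
    (hf : ∀ a b c, f (M.med a b c) = N.med (f a) (f b) (f c))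
    (hg : ∀ a b c, g (M.med a b c) = P.med (g a) (g b) (g c))
    (hx : x ∈ medSpan M.med A) : ∃ y ∈ MSet M.med A, f y = f x ∧ g y = g x := by
  obtain ⟨a, ha, b, hb, c, hc, ⟨fab, fbc, fac⟩, gab, gbc, gac⟩ :=
    exists_three_unrelated (A := A)
      (R := fun a b => f b ∈ N.branch (f x) (f a)) (S := fun a b => g b ∈ P.branch (g x) (g a))
      (fun _ _ => mem_branch_symm) (fun _ _ => mem_branch_symm)
      (fun _ _ _ => mem_branch_trans hN) (fun _ _ _ => mem_branch_trans hP)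
      (fun _ _ => exists_notMem_branch_of_mem_medSpan hN hN hf hf hx _ _)
      (fun _ _ => exists_notMem_branch_of_mem_medSpan hP hP hg hg hx _ _)
      (fun _ _ => exists_notMem_branch_of_mem_medSpan hN hP hf hg hx _ _)
      (nonempty_of_mem_medSpan hx)
  refine ⟨M.med a b c, ⟨a, ha, b, hb, c, hc, rfl⟩, ?_, ?_⟩
  · rw [hf]
    exact med_eq_of_mem_interval (not_not.1 fab) (not_not.1 fbc) (not_not.1 fac)
  · rw [hg]
    exact med_eq_of_mem_interval (not_not.1 gab) (not_not.1 gbc) (not_not.1 gac)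

end Hom

section Product

variable {ι : Type*} {T : ι → Type*} {alg : ∀ i, MedianAlgebra (T i)} {f : X → ∀ i, T i}
  {A B : Set X}

theorem exists_mem_MSet_eq_on_of_card_le_succ
    (hf : ∀ a b c i, f (M.med a b c) i = (alg i).med (f a i) (f b i) (f c i)) {t : ∀ i, T i}
    {n : ℕ} (hn : 2 ≤ n)
    (hB : ∀ S : Finset ι, S.card ≤ n → ∃ y ∈ B, ∀ i ∈ S, f y i = t i)
    (S : Finset ι) (hS : S.card ≤ n + 1) : ∃ y ∈ MSet M.med B, ∀ i ∈ S, f y i = t i := by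
  classical
  rcases hS.lt_or_eq with hlt | hcard
  · obtain ⟨y, hy, hyt⟩ := hB S (Nat.lt_succ_iff.1 hlt)
    exact ⟨y, M.subset_MSet B hy, hyt⟩
  obtain ⟨j, hj, k, hk, l, hl, hjk, hjl, hkl⟩ := Finset.two_lt_card.1 (by lia : 2 < S.card)
  have omit_one (s : ι) (hs : s ∈ S) : ∃ y ∈ B, ∀ i ∈ S, i ≠ s → f y i = t i := by
    obtain ⟨y, hy, hyt⟩ := hB (S.erase s) (by rw [Finset.card_erase_of_mem hs]; lia)
    exact ⟨y, hy, fun i hi his => hyt i (Finset.mem_erase.2 ⟨his, hi⟩)⟩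
  obtain ⟨a, ha, hat⟩ := omit_one j hj
  obtain ⟨b, hb, hbt⟩ := omit_one k hk
  obtain ⟨c, hc, hct⟩ := omit_one l hl
  refine ⟨M.med a b c, ⟨a, ha, b, hb, c, hc, rfl⟩, fun i hi => ?_⟩
  rw [hf]
  rcases eq_or_ne i j with rfl | hij
  · rw [hbt i hi hjk, hct i hi hjl, (alg i).med_self_right]
  rcases eq_or_ne i k with rfl | hik
  · rw [hat i hi hij, hct i hi hkl, (alg i).med_self_outer]
  · rw [hat i hi hij, hbt i hi hik, (alg i).absorb]

theorem exists_mem_MSet_eq_on_of_card_le_two (hrank : ∀ i, Rank1 (alg i))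
    (hf : ∀ a b c i, f (M.med a b c) i = (alg i).med (f a i) (f b i) (f c i))
    (hx : x ∈ medSpan M.med A) (S : Finset ι) (hS : S.card ≤ 2) :
    ∃ y ∈ MSet M.med A, ∀ i ∈ S, f y i = f x i := by
  classical
  have pair (i j : ι) : ∃ y ∈ MSet M.med A, f y i = f x i ∧ f y j = f x j :=
    exists_mem_MSet_of_mem_medSpan (f := (f · i)) (g := (f · j)) (hrank i) (hrank j)
      (fun a b c => hf a b c i) (fun a b c => hf a b c j) hx
  obtain h | h | h : S.card = 0 ∨ S.card = 1 ∨ S.card = 2 := by lia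
  · obtain ⟨a, ha⟩ := nonempty_of_mem_medSpan hx
    exact ⟨a, M.subset_MSet A ha, by simp [Finset.card_eq_zero.1 h]⟩
  · obtain ⟨i, rfl⟩ := Finset.card_eq_one.1 h
    simpa using pair i i
  · obtain ⟨i, j, -, rfl⟩ := Finset.card_eq_two.1 h
    simpa using pair i j

theorem exists_mem_iterate_MSet_eq_on (hrank : ∀ i, Rank1 (alg i))
    (hf : ∀ a b c i, f (M.med a b c) i = (alg i).med (f a i) (f b i) (f c i))
    (hx : x ∈ medSpan M.med A) (k : ℕ) (S : Finset ι) (hS : S.card ≤ k + 2) :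
    ∃ y ∈ (MSet M.med)^[k + 1] A, ∀ i ∈ S, f y i = f x i := by
  induction k generalizing S with
  | zero => exact exists_mem_MSet_eq_on_of_card_le_two hrank hf hx S hS
  | succ k ih =>
    rw [Function.iterate_succ_apply']
    exact exists_mem_MSet_eq_on_of_card_le_succ hf (Nat.le_add_left 2 k) ih S hS

end Product

end MedianAlgebra

theorem le_two_pow_two_pow_add_two (d : ℕ) : d ≤ 2 ^ 2 ^ (d * (d - 1) / 2) + 2 := by
  have hd : d ≤ d * (d - 1) / 2 + 2 := by
    cases d with
    | zero => exact Nat.zero_le _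
    | succ n => rw [Nat.triangle_succ]; lia
  calc d ≤ d * (d - 1) / 2 + 2 := hd
    _ ≤ 2 ^ 2 ^ (d * (d - 1) / 2) + 2 :=
      Nat.add_le_add_right (Nat.lt_two_pow_self.trans Nat.lt_two_pow_self).le 2

theorem stmt8_general {X : Type*} (M : MedianAlgebra X) {ι : Type*} [Fintype ι]
    {T : ι → Type*} (alg : ∀ i, MedianAlgebra (T i)) (hrank : ∀ i, Rank1 (alg i))
    (f : X → ∀ i, T i) (hinj : Function.Injective f)
    (hmed : ∀ x y z i, f (M.med x y z) i = (alg i).med (f x i) (f y i) (f z i))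
    (A : Set X) {k : ℕ} (hk : Fintype.card ι ≤ k + 2) :
    medSpan M.med A = (MSet M.med)^[k + 1] A := by
  refine Set.Subset.antisymm (fun x hx => ?_) (iterate_MSet_subset_medSpan _)
  obtain ⟨y, hy, hyx⟩ :=
    MedianAlgebra.exists_mem_iterate_MSet_eq_on hrank hmed hx k Finset.univ hk
  have hxy : y = x := hinj (funext fun i => hyx i (Finset.mem_univ i))
  exact hxy ▸ hy

/-- if a median algebra `M` admits an injective median morphism
into a product of `d` rank-1 median algebras, then for every subset `A`,
`⟨A⟩ = ℳ^[g(d)](A)` with `g(d) = 1 + 2^(2^(d(d-1)/2))`. -/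
theorem stmt8 {X : Type*} (M : MedianAlgebra X) (d : ℕ)
    {T : Fin d → Type*} (alg : ∀ i, MedianAlgebra (T i))
    (hrank : ∀ i, Rank1 (alg i))
    (f : X → ∀ i, T i) (hinj : Function.Injective f)
    (hmed : ∀ x y z i, f (M.med x y z) i = (alg i).med (f x i) (f y i) (f z i))
    (A : Set X) :
    medSpan M.med A = (MSet M.med)^[1 + 2 ^ 2 ^ (d * (d - 1) / 2)] A := by
  rw [Nat.add_comm]
  exact stmt8_general M alg hrank f hinj hmed A
    ((Fintype.card_fin d).trans_le (le_two_pow_two_pow_add_two d))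
end

section
/- Let G be a finitely generated group with finite generating set S₀ and associated left-invariant word metric d. Suppose there is a constant c > 0 such that for every finite generating set S ⊆ G and all x,y ∈ G one has d(x,y) ≤ c·max_{s∈S}[d(x,sx) + d(y,sy)] (i.e., the left-multiplication action of G on itself is c-uniformly non-elementary). Then every central element z ∈ Z(G) satisfies |z|_{S₀} ≤ 2c·max_{s∈S₀}|s|_{S₀} = 2c, and consequently the centre Z(G) is finite. -/
/-- The word length of `g` with respect to a generating set `S`: the least
length of a word in `S ∪ S⁻¹` representing `g`. -/
noncomputable def wordLength {G : Type*} [Group G] (S : Set G) (g : G) : ℕ :=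
  sInf {n : ℕ | ∃ l : List G, l.length = n ∧ (∀ x ∈ l, x ∈ S ∨ x⁻¹ ∈ S) ∧ l.prod = g}

/-- The left-invariant word metric `d(a,b) = |a⁻¹ b|_S`. -/
noncomputable def wordDist {G : Type*} [Group G] (S : Set G) (a b : G) : ℕ :=
  wordLength S (a⁻¹ * b)

/-- The word distance from `g` to the fixed subgroup `Fix φ`. -/
noncomputable def distToFix {G : Type*} [Group G] (S : Set G) (φ : G ≃* G) (g : G) : ℕ :=
  sInf {n : ℕ | ∃ h : G, φ h = h ∧ wordDist S g h = n}

section WordMetric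

variable {G : Type*} [Group G] {S : Set G}

theorem wordLength_le_one_of_mem {s : G} (hs : s ∈ S) : wordLength S s ≤ 1 :=
  Nat.sInf_le ⟨[s], rfl, by simp [hs], by simp⟩

theorem exists_list_length_eq_wordLength {g : G} (hg : g ∈ Subgroup.closure S) :
    ∃ l : List G, l.length = wordLength S g ∧ (∀ x ∈ l, x ∈ S ∨ x⁻¹ ∈ S) ∧ l.prod = g := by
  rw [← Subgroup.mem_toSubmonoid, Subgroup.closure_toSubmonoid] at hg
  obtain ⟨l, hl, hprod⟩ := Submonoid.exists_list_of_mem_closure hg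
  exact Nat.sInf_mem
    (s := {n : ℕ | ∃ l : List G, l.length = n ∧ (∀ x ∈ l, x ∈ S ∨ x⁻¹ ∈ S) ∧ l.prod = g})
    ⟨l.length, l, rfl, hl, hprod⟩

-- Outside `closure S` the word length is `sInf ∅ = 0`, so the whole ball may be infinite.
theorem finite_setOf_mem_closure_wordLength_le (hS : S.Finite) (n : ℕ) :
    {g ∈ Subgroup.closure S | wordLength S g ≤ n}.Finite := by
  have : Finite {x : G // x ∈ S ∨ x⁻¹ ∈ S} := hS.union hS.inv
  refine ((List.finite_length_le {x : G // x ∈ S ∨ x⁻¹ ∈ S} n).image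
    fun l ↦ (l.map Subtype.val).prod).subset ?_
  rintro g ⟨hg, hgn⟩
  obtain ⟨l, hlen, hl, hprod⟩ := exists_list_length_eq_wordLength hg
  lift l to List {x : G // x ∈ S ∨ x⁻¹ ∈ S} using hl
  rw [List.length_map] at hlen
  exact ⟨l, hlen.trans_le hgn, hprod⟩

theorem wordDist_one_left (g : G) : wordDist S 1 g = wordLength S g := by
  rw [wordDist, inv_one, one_mul]

theorem wordDist_mul_self_of_commute {g z : G} (h : Commute g z) :
    wordDist S z (g * z) = wordLength S g := by
  rw [wordDist, h.eq, inv_mul_cancel_left]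

end WordMetric

section Centralizer

variable {G : Type*} [Group G] {S : Finset G} {z : G}

theorem sup_wordDist_mul_le_two_of_mem_centralizer (hz : z ∈ Subgroup.centralizer (S : Set G)) :
    (S.sup fun s ↦ wordDist (S : Set G) 1 (s * 1) + wordDist (S : Set G) z (s * z)) ≤ 2 := by
  refine Finset.sup_le fun s hs ↦ ?_
  have hcomm : Commute s z := Subgroup.mem_centralizer_iff.mp hz s hs
  calc wordDist (S : Set G) 1 (s * 1) + wordDist (S : Set G) z (s * z)
      = wordLength (S : Set G) s + wordLength (S : Set G) s := by
        rw [mul_one, wordDist_one_left, wordDist_mul_self_of_commute hcomm]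
    _ ≤ 1 + 1 := add_le_add (wordLength_le_one_of_mem hs) (wordLength_le_one_of_mem hs)

theorem wordLength_le_two_mul_of_mem_centralizer {c : ℝ} (hc : 0 ≤ c)
    (hz : z ∈ Subgroup.centralizer (S : Set G))
    (h : (wordDist (S : Set G) 1 z : ℝ) ≤
      c * ((S.sup fun s ↦
        wordDist (S : Set G) 1 (s * 1) + wordDist (S : Set G) z (s * z) : ℕ) : ℝ)) :
    (wordLength (S : Set G) z : ℝ) ≤ 2 * c := by
  rw [wordDist_one_left] at h
  calc (wordLength (S : Set G) z : ℝ)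
      ≤ c * ((S.sup fun s ↦
          wordDist (S : Set G) 1 (s * 1) + wordDist (S : Set G) z (s * z) : ℕ) : ℝ) := h
    _ ≤ c * 2 := by
        gcongr
        exact_mod_cast sup_wordDist_mul_le_two_of_mem_centralizer hz
    _ = 2 * c := mul_comm c 2

end Centralizer

theorem stmt13_general {G : Type*} [Group G] (S₀ : Finset G)
    (hgen : Subgroup.closure (S₀ : Set G) = ⊤)
    (c : ℝ) (hc : 0 ≤ c)
    (hS₀ : ∀ x y : G, (wordDist (S₀ : Set G) x y : ℝ) ≤
      c * ((S₀.sup fun s ↦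
        wordDist (S₀ : Set G) x (s * x) + wordDist (S₀ : Set G) y (s * y) : ℕ) : ℝ)) :
    (∀ z ∈ Subgroup.center G, (wordLength (S₀ : Set G) z : ℝ) ≤ 2 * c) ∧
    (Subgroup.center G : Set G).Finite := by
  have hbound : ∀ z ∈ Subgroup.center G, (wordLength (S₀ : Set G) z : ℝ) ≤ 2 * c := fun z hz ↦
    wordLength_le_two_mul_of_mem_centralizer hc (Subgroup.center_le_centralizer _ hz) (hS₀ 1 z)
  refine ⟨hbound, (finite_setOf_mem_closure_wordLength_le S₀.finite_toSet ⌊2 * c⌋₊).subset ?_⟩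
  exact fun z hz ↦ ⟨hgen ▸ Subgroup.mem_top z, Nat.le_floor (hbound z hz)⟩

/-- if the left-multiplication action of a finitely generated
group `G` on itself (with word metric for the finite generating set `S₀`) is
`c`-uniformly non-elementary, then every central element `z` satisfies
`|z|_{S₀} ≤ 2c`, and the centre of `G` is finite. -/
theorem stmt13 {G : Type*} [Group G] (S₀ : Finset G)
    (hgen : Subgroup.closure (S₀ : Set G) = ⊤)
    (c : ℝ) (hc : 0 < c)
    (hUNE : ∀ S : Finset G, Subgroup.closure (S : Set G) = ⊤ →
      ∀ x y : G, (wordDist (S₀ : Set G) x y : ℝ) ≤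
        c * ((S.sup fun s =>
          wordDist (S₀ : Set G) x (s * x) + wordDist (S₀ : Set G) y (s * y) : ℕ) : ℝ)) :
    (∀ z ∈ Subgroup.center G, (wordLength (S₀ : Set G) z : ℝ) ≤ 2 * c) ∧
    (Subgroup.center G : Set G).Finite :=
  stmt13_general S₀ hgen c hc.le (hUNE S₀ hgen)
end
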